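/- Fix an integer N ≥ 2, t ∈ [0,1], n ≥ 1 and integers a_1, …, a_n all ≥ N. Let s^t_{N,n} be defined recursively by s^t_{N,0} = t and s^t_{N,k} = 1 − N/(a_k + s^t_{N,k−1}). Then for every Borel set C ⊆ [0,1], ρ^t_N(R_N^{−n}(C) ∩ I(a_1,…,a_n)) = ρ^t_N(I(a_1,…,a_n)) · ρ^{s^t_{N,n}}_N(C). -/

import Mathlib

open MeasureTheory Set Real Filter

/-- The Rényi-type continued fraction map `R_N`. -/
noncomputable def RN (N : ℕ) (x : ℝ) : ℝ :=
  if x = 1 then 0 else (N : ℝ) / (1 - x) - ⌊(N : ℝ) / (1 - x)⌋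

/-- `digit N k x` is the `(k+1)`-st digit `a_{k+1}(x)`. -/
noncomputable def digit (N k : ℕ) (x : ℝ) : ℤ :=
  ⌊(N : ℝ) / (1 - (RN N)^[k] x)⌋

/-- The cylinder `I(a_1, …, a_n)`. -/
def cyl (N n : ℕ) (a : ℕ → ℤ) : Set ℝ :=
  {x | x ∈ Set.Icc (0 : ℝ) 1 ∧ Irrational x ∧ ∀ k < n, digit N k x = a k}

/-- The conditional probability measure `ρ^t_N`, with density
`N(N-1+t)/[N-(1-x)(1-t)]²` on `[0,1]`. -/
noncomputable def rhoT (N : ℕ) (t : ℝ) : Measure ℝ :=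
  (volume.restrict (Set.Icc (0 : ℝ) 1)).withDensity fun x =>
    ENNReal.ofReal ((N : ℝ) * ((N : ℝ) - 1 + t) / ((N : ℝ) - (1 - x) * (1 - t)) ^ 2)

/-- `s^t_{N,k}` built from a prescribed digit sequence `a`. -/
noncomputable def sRec (N : ℕ) (t : ℝ) (a : ℕ → ℤ) : ℕ → ℝ
  | 0 => t
  | k + 1 => 1 - (N : ℝ) / ((a k : ℝ) + sRec N t a k)

/-! The inverse branch of `R_N` with digit `a` is the Möbius map `y ↦ 1 - N / (a + y)`, and pulling
the density of `ρ^t` back along it gives a multiple of the density of `ρ^s`, where `s` is the image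
of `t` under the same Möbius map. So under `ρ^t`, given that the first digit is `a`, the point
`R_N x` has law `ρ^s`; iterating this shows that the push-forward under `R_N^n` of `ρ^t` restricted
to a cylinder of rank `n` is a multiple of `ρ^{s_n}`. Since `ρ^{s_n}` has total mass one, the
multiple is the mass of the cylinder. All `ρ^t` with `t > 1 - N` are probability measures, and the
Möbius maps with `a ≥ N` preserve this range of parameters. -/

section MoebiusBranch

/-- The inverse branch `y ↦ 1 - c / (a + y)` of the map `x ↦ c / (1 - x) - ⌊c / (1 - x)⌋` that
prepends the digit `a`. The recursion `sRec` iterates the same map on the parameter `t`. -/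
noncomputable def branch (c a y : ℝ) : ℝ := 1 - c / (a + y)

variable {c a t x y : ℝ}

lemma div_one_sub_branch (hc : c ≠ 0) : c / (1 - branch c a y) = a + y := by
  rw [branch, sub_sub_cancel, div_div_cancel₀ hc]

lemma branch_div_one_sub_sub (hc : c ≠ 0) : branch c a (c / (1 - x) - a) = x := by
  rw [branch, add_sub_cancel, div_div_cancel₀ hc, sub_sub_cancel]

lemma one_sub_lt_branch (hc : 0 < c) (hca : c ≤ a) (ht : 1 - c < t) : 1 - c < branch c a t :=
  sub_lt_sub_left (div_lt_self hc (by linarith)) 1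

lemma branch_mem_Icc (hc : 0 < c) (hca : c ≤ a) (hy : 0 ≤ y) : branch c a y ∈ Icc (0 : ℝ) 1 := by
  have hay : 0 < a + y := by linarith
  exact ⟨sub_nonneg.2 ((div_le_one hay).2 (by linarith)), sub_le_self 1 (div_pos hc hay).le⟩

lemma hasDerivAt_branch (hay : a + y ≠ 0) :
    HasDerivAt (branch c a) (c / (a + y) ^ 2) y := by
  have h := ((hasDerivAt_const y c).div ((hasDerivAt_id' y).const_add a) hay).const_sub 1
  exact h.congr_deriv (by ring)

end MoebiusBranch

section Density

/-- The density of `ρ^t_N`, with a real parameter `c` in place of `N`. -/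
noncomputable def rhoDensity (c t x : ℝ) : ℝ := c * (c - 1 + t) / (c - (1 - x) * (1 - t)) ^ 2

variable {c a t x y : ℝ}

lemma measurable_rhoDensity (c t : ℝ) : Measurable (rhoDensity c t) := by
  unfold rhoDensity
  fun_prop

lemma rhoDensity_nonneg (hc : 0 < c) (ht : 1 - c < t) (x : ℝ) : 0 ≤ rhoDensity c t x :=
  div_nonneg (mul_nonneg hc.le (by linarith)) (sq_nonneg _)

lemma rhoDensity_denominator_pos (hc : 0 < c) (ht : 1 - c < t) (hx : x ∈ Icc (0 : ℝ) 1) :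
    0 < c - (1 - x) * (1 - t) := by
  have h : c - (1 - x) * (1 - t) = x * c + (1 - x) * (c - 1 + t) := by ring
  rw [h]
  rcases hx.1.eq_or_lt with rfl | hx0
  · linarith
  · exact add_pos_of_pos_of_nonneg (mul_pos hx0 hc)
      (mul_nonneg (sub_nonneg.2 hx.2) (by linarith))

lemma continuousOn_rhoDensity (hc : 0 < c) (ht : 1 - c < t) :
    ContinuousOn (rhoDensity c t) (Icc 0 1) :=
  ContinuousOn.div (by fun_prop) (by fun_prop)
    fun _ hx => pow_ne_zero 2 (rhoDensity_denominator_pos hc ht hx).ne'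

lemma hasDerivAt_rhoDensity_primitive (hx : c - (1 - x) * (1 - t) ≠ 0) :
    HasDerivAt (fun x => c * x / (c - (1 - x) * (1 - t))) (rhoDensity c t x) x := by
  have hnum : HasDerivAt (fun x => c * x) c x := by
    simpa using (hasDerivAt_id' x).const_mul c
  have hden : HasDerivAt (fun x => c - (1 - x) * (1 - t)) (1 - t) x := by
    simpa using (((hasDerivAt_id' x).const_sub 1).mul_const (1 - t)).const_sub c
  refine (hnum.div hden hx).congr_deriv ?_
  rw [rhoDensity]
  congr 1
  ring

lemma rhoDensity_branch (hc : c ≠ 0) (hay : a + y ≠ 0) (hat : a + t ≠ 0)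
    (hat₁ : a + t - 1 ≠ 0) :
    c / (a + y) ^ 2 * rhoDensity c t (branch c a y)
      = (c - 1 + t) / ((a + t - 1) * (a + t)) * rhoDensity c (branch c a t) y := by
  have hden_left : c - (1 - branch c a y) * (1 - t) = c * (a + y - 1 + t) / (a + y) := by
    rw [branch]
    field_simp
    ring
  have hden_right : c - (1 - y) * (1 - branch c a t) = c * (a + y - 1 + t) / (a + t) := by
    rw [branch]
    field_simp
    ring
  have hnum : c - 1 + branch c a t = c * (a + t - 1) / (a + t) := by
    rw [branch]
    field_simp
    ring
  rw [rhoDensity, rhoDensity, hden_left, hden_right, hnum]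
  field_simp

end Density

section RenyiMap

/-- The irrational points of `[0, 1]`, on which digits and cylinders are defined. -/
def unitIrrationals : Set ℝ := {x | x ∈ Icc (0 : ℝ) 1 ∧ Irrational x}

variable {N : ℕ} {a : ℤ} {x y : ℝ}

lemma measurableSet_unitIrrationals : MeasurableSet unitIrrationals :=
  measurableSet_Icc.inter (countable_range ((↑) : ℚ → ℝ)).measurableSet.compl

lemma unitIrrationals_ae_eq_Icc : unitIrrationals =ᵐ[volume] Icc (0 : ℝ) 1 :=
  inter_ae_eq_left_of_ae_eq_univ
    (eventuallyEq_univ.2 ((countable_range ((↑) : ℚ → ℝ)).ae_notMem volume))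

lemma RN_of_ne_one (hx : x ≠ 1) : RN N x = Int.fract ((N : ℝ) / (1 - x)) := if_neg hx

lemma measurable_RN (N : ℕ) : Measurable (RN N) :=
  Measurable.ite (measurableSet_singleton 1) measurable_const
    (measurable_fract.comp (by fun_prop : Measurable fun x : ℝ => (N : ℝ) / (1 - x)))

lemma mapsTo_RN_unitIrrationals (hN : 1 ≤ N) :
    MapsTo (RN N) unitIrrationals unitIrrationals := by
  rintro x ⟨-, hx⟩
  rw [RN_of_ne_one hx.ne_one]
  have hsub : Irrational (1 - x) := by simpa using hx.natCast_sub 1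
  exact ⟨⟨Int.fract_nonneg _, (Int.fract_lt_one _).le⟩,
    (hsub.natCast_div (by lia)).sub_intCast _⟩

lemma branch_mem_unitIrrationals (hN : 1 ≤ N) (ha : (N : ℤ) ≤ a) (hy : y ∈ unitIrrationals) :
    branch N a y ∈ unitIrrationals := by
  have hN₀ : (0 : ℝ) < N := by exact_mod_cast hN
  have hadd : Irrational (N / (a + y)) := (hy.2.intCast_add a).natCast_div (by lia)
  exact ⟨branch_mem_Icc hN₀ (by exact_mod_cast ha) hy.1.1,
    by simpa [branch] using hadd.natCast_sub 1⟩

lemma digit_zero_branch (hN : 1 ≤ N) (hy : y ∈ unitIrrationals) :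
    digit N 0 (branch N a y) = a := by
  have hN₀ : (N : ℝ) ≠ 0 := by positivity
  have hy₁ : y < 1 := hy.1.2.lt_of_ne hy.2.ne_one
  rw [digit, Function.iterate_zero_apply, div_one_sub_branch hN₀, Int.floor_intCast_add,
    Int.floor_eq_zero_iff.2 ⟨hy.1.1, hy₁⟩, add_zero]

lemma RN_branch (hN : 1 ≤ N) (ha : (N : ℤ) ≤ a) (hy : y ∈ unitIrrationals) :
    RN N (branch N a y) = y := by
  have hN₀ : (N : ℝ) ≠ 0 := by positivity
  have hy₁ : y < 1 := hy.1.2.lt_of_ne hy.2.ne_one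
  rw [RN_of_ne_one (branch_mem_unitIrrationals hN ha hy).2.ne_one, div_one_sub_branch hN₀,
    Int.fract_intCast_add, Int.fract_eq_self.2 ⟨hy.1.1, hy₁⟩]

lemma branch_digit_zero_RN (hN : 1 ≤ N) (hx : x ≠ 1) : branch N (digit N 0 x) (RN N x) = x := by
  rw [RN_of_ne_one hx]
  exact branch_div_one_sub_sub (by positivity)

lemma injOn_branch (hN : 1 ≤ N) (ha : (N : ℤ) ≤ a) : InjOn (branch N a) unitIrrationals :=
  LeftInvOn.injOn (f₁' := RN N) fun _ hy => RN_branch hN ha hy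

end RenyiMap

section Cylinders

variable {N : ℕ}

lemma measurable_digit (N k : ℕ) : Measurable (digit N k) := by
  have hRN : Measurable (RN N)^[k] := (measurable_RN N).iterate k
  unfold digit
  fun_prop

lemma cyl_zero (N : ℕ) (a : ℕ → ℤ) : cyl N 0 a = unitIrrationals := by
  ext x
  simp [cyl, unitIrrationals]

lemma mem_cyl_one {a : ℕ → ℤ} {x : ℝ} :
    x ∈ cyl N 1 a ↔ x ∈ unitIrrationals ∧ digit N 0 x = a 0 := by
  simp [cyl, unitIrrationals, and_assoc]

lemma measurableSet_cyl_one (N : ℕ) (a : ℕ → ℤ) : MeasurableSet (cyl N 1 a) := by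
  have h : cyl N 1 a = unitIrrationals ∩ digit N 0 ⁻¹' {a 0} := ext fun _ => mem_cyl_one
  rw [h]
  exact measurableSet_unitIrrationals.inter (measurable_digit N 0 (measurableSet_singleton _))

lemma cyl_succ (hN : 1 ≤ N) (n : ℕ) (a : ℕ → ℤ) :
    cyl N (n + 1) a = (RN N)^[n] ⁻¹' cyl N 1 (fun _ => a n) ∩ cyl N n a := by
  ext x
  simp only [mem_inter_iff, mem_preimage, mem_cyl_one]
  constructor
  · rintro ⟨hx, hirr, hdigits⟩
    exact ⟨⟨(mapsTo_RN_unitIrrationals hN).iterate n ⟨hx, hirr⟩, hdigits n n.lt_succ_self⟩,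
      hx, hirr, fun k hk => hdigits k (hk.trans n.lt_succ_self)⟩
  · rintro ⟨⟨-, hlast⟩, hx, hirr, hdigits⟩
    exact ⟨hx, hirr, Nat.forall_lt_succ_right.2 ⟨hdigits, hlast⟩⟩

lemma preimage_RN_inter_cyl_one (hN : 1 ≤ N) {a : ℤ} (ha : (N : ℤ) ≤ a) (C : Set ℝ) :
    RN N ⁻¹' C ∩ cyl N 1 (fun _ => a) = branch N a '' (C ∩ unitIrrationals) := by
  ext x
  rw [mem_inter_iff, mem_cyl_one]
  constructor
  · rintro ⟨hC, hx, rfl⟩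
    exact ⟨RN N x, ⟨hC, mapsTo_RN_unitIrrationals hN hx⟩, branch_digit_zero_RN hN hx.2.ne_one⟩
  · rintro ⟨y, ⟨hC, hy⟩, rfl⟩
    exact ⟨by rwa [mem_preimage, RN_branch hN ha hy], branch_mem_unitIrrationals hN ha hy,
      digit_zero_branch hN hy⟩

end Cylinders

section ConditionalMeasure

variable {N : ℕ} {t x : ℝ}

lemma rhoT_apply (N : ℕ) (t : ℝ) (S : Set ℝ) :
    rhoT N t S = ∫⁻ x in S ∩ unitIrrationals, ENNReal.ofReal (rhoDensity N t x) := by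
  rw [rhoT, withDensity_apply', ← Measure.restrict_congr_set unitIrrationals_ae_eq_Icc,
    Measure.restrict_restrict' measurableSet_unitIrrationals]
  rfl

lemma rhoT_restrict_unitIrrationals (N : ℕ) (t : ℝ) :
    (rhoT N t).restrict unitIrrationals = rhoT N t := by
  ext S hS
  rw [Measure.restrict_apply hS, rhoT_apply, rhoT_apply, inter_assoc, inter_self]

lemma rhoT_Icc_zero (hN : 1 ≤ N) (ht : 1 - N < t) (hx : x ∈ Icc (0 : ℝ) 1) :
    rhoT N t (Icc 0 x) = ENNReal.ofReal (N * x / (N - (1 - x) * (1 - t))) := by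
  have hN₀ : (0 : ℝ) < N := by exact_mod_cast hN
  have hsub : Icc 0 x ⊆ Icc (0 : ℝ) 1 := Icc_subset_Icc_right hx.2
  have hcont : ContinuousOn (rhoDensity N t) (Icc 0 x) :=
    (continuousOn_rhoDensity hN₀ ht).mono hsub
  have hftc : ∫ u in 0..x, rhoDensity N t u = N * x / (N - (1 - x) * (1 - t)) := by
    rw [intervalIntegral.integral_eq_sub_of_hasDerivAt
      (f := fun u => N * u / (N - (1 - u) * (1 - t)))]
    · simp
    · intro u hu
      rw [uIcc_of_le hx.1] at hu
      exact hasDerivAt_rhoDensity_primitive (rhoDensity_denominator_pos hN₀ ht (hsub hu)).ne'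
    · exact ContinuousOn.intervalIntegrable (by rwa [uIcc_of_le hx.1])
  rw [rhoT, withDensity_apply _ measurableSet_Icc, Measure.restrict_restrict measurableSet_Icc,
    inter_eq_left.2 hsub, ← hftc, intervalIntegral.integral_of_le hx.1,
    ← integral_Icc_eq_integral_Ioc]
  exact (ofReal_integral_eq_lintegral_ofReal hcont.integrableOn_Icc
    (ae_of_all _ (rhoDensity_nonneg hN₀ ht))).symm

lemma isProbabilityMeasure_rhoT (hN : 1 ≤ N) (ht : 1 - N < t) :
    IsProbabilityMeasure (rhoT N t) := by
  have hN₀ : (N : ℝ) ≠ 0 := by positivity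
  have hIcc : rhoT N t univ = rhoT N t (Icc 0 1) := by
    rw [rhoT_apply, rhoT_apply, univ_inter, inter_eq_right.2 fun _ hx => hx.1]
  exact ⟨by simp [hIcc, rhoT_Icc_zero hN ht, hN₀]⟩

lemma rhoT_image_branch (hN : 1 ≤ N) (ht : 1 - N < t) {a : ℤ} (ha : (N : ℤ) ≤ a) {D : Set ℝ}
    (hD : MeasurableSet D) (hsub : D ⊆ unitIrrationals) :
    rhoT N t (branch N a '' D)
      = ENNReal.ofReal ((N - 1 + t) / ((a + t - 1) * (a + t))) * rhoT N (branch N a t) D := by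
  have hN₀ : (0 : ℝ) < N := by exact_mod_cast hN
  have hNa : (N : ℝ) ≤ a := by exact_mod_cast ha
  have himage : branch N a '' D ⊆ unitIrrationals :=
    image_subset_iff.2 fun y hy => branch_mem_unitIrrationals hN ha (hsub hy)
  have hne : ∀ y ∈ D, (a : ℝ) + y ≠ 0 := fun y hy =>
    (add_pos_of_pos_of_nonneg (hN₀.trans_le hNa) (hsub hy).1.1).ne'
  have hderiv : ∀ y ∈ D, HasDerivWithinAt (branch N a) (N / (a + y) ^ 2) D y := fun y hy =>
    (hasDerivAt_branch (hne y hy)).hasDerivWithinAt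
  have hfactor : (0 : ℝ) ≤ (N - 1 + t) / ((a + t - 1) * (a + t)) :=
    div_nonneg (by linarith) (mul_nonneg (by linarith) (by linarith))
  rw [rhoT_apply, rhoT_apply, inter_eq_left.2 himage, inter_eq_left.2 hsub,
    lintegral_image_eq_lintegral_abs_deriv_mul hD hderiv ((injOn_branch hN ha).mono hsub),
    ← lintegral_const_mul _ (measurable_rhoDensity _ _).ennreal_ofReal]
  refine setLIntegral_congr_fun hD fun y hy => ?_
  rw [abs_of_nonneg (by positivity), ← ENNReal.ofReal_mul (by positivity),
    rhoDensity_branch hN₀.ne' (hne y hy) (by linarith) (by linarith), ENNReal.ofReal_mul hfactor]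

lemma map_RN_restrict_cyl_one (hN : 1 ≤ N) (ht : 1 - N < t) {a : ℤ} (ha : (N : ℤ) ≤ a) :
    ((rhoT N t).restrict (cyl N 1 fun _ => a)).map (RN N)
      = ENNReal.ofReal ((N - 1 + t) / ((a + t - 1) * (a + t))) • rhoT N (branch N a t) := by
  ext C hC
  rw [Measure.map_apply (measurable_RN N) hC, Measure.restrict_apply (measurable_RN N hC),
    preimage_RN_inter_cyl_one hN ha,
    rhoT_image_branch hN ht ha (hC.inter measurableSet_unitIrrationals) inter_subset_right,
    ← Measure.restrict_apply hC, rhoT_restrict_unitIrrationals, Measure.smul_apply, smul_eq_mul]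

lemma one_sub_lt_sRec (hN : 1 ≤ N) (ht : 1 - N < t) {a : ℕ → ℤ} {n : ℕ}
    (ha : ∀ k < n, (N : ℤ) ≤ a k) : 1 - N < sRec N t a n := by
  induction n with
  | zero => exact ht
  | succ n ih =>
    rw [Nat.forall_lt_succ_right] at ha
    exact one_sub_lt_branch (by exact_mod_cast hN) (by exact_mod_cast ha.2) (ih ha.1)

lemma exists_map_iterate_RN_restrict_cyl_eq_smul (hN : 1 ≤ N) (ht : 1 - N < t) {a : ℕ → ℤ}
    {n : ℕ} (ha : ∀ k < n, (N : ℤ) ≤ a k) :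
    ∃ K : ENNReal, ((rhoT N t).restrict (cyl N n a)).map (RN N)^[n]
      = K • rhoT N (sRec N t a n) := by
  induction n with
  | zero =>
    refine ⟨1, ?_⟩
    rw [cyl_zero, rhoT_restrict_unitIrrationals, Function.iterate_zero, Measure.map_id, one_smul,
      sRec]
  | succ n ih =>
    rw [Nat.forall_lt_succ_right] at ha
    obtain ⟨K, hK⟩ := ih ha.1
    have hiter : Measurable (RN N)^[n] := (measurable_RN N).iterate n
    have hcyl : MeasurableSet (cyl N 1 fun _ => a n) := measurableSet_cyl_one N _
    refine ⟨K * ENNReal.ofReal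
      ((N - 1 + sRec N t a n) / ((a n + sRec N t a n - 1) * (a n + sRec N t a n))), ?_⟩
    rw [cyl_succ hN, ← Measure.restrict_restrict (hiter hcyl), Function.iterate_succ',
      ← Measure.map_map (measurable_RN N) hiter, ← Measure.restrict_map hiter hcyl, hK,
      Measure.restrict_smul, Measure.map_smul,
      map_RN_restrict_cyl_one hN (one_sub_lt_sRec hN ht ha.1) ha.2, smul_smul]
    rfl

lemma map_iterate_RN_restrict_cyl (hN : 1 ≤ N) (ht : 1 - N < t) {a : ℕ → ℤ} {n : ℕ}
    (ha : ∀ k < n, (N : ℤ) ≤ a k) :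
    ((rhoT N t).restrict (cyl N n a)).map (RN N)^[n]
      = rhoT N t (cyl N n a) • rhoT N (sRec N t a n) := by
  obtain ⟨K, hK⟩ := exists_map_iterate_RN_restrict_cyl_eq_smul hN ht ha
  have hprob := isProbabilityMeasure_rhoT hN (one_sub_lt_sRec hN ht ha)
  have hmass : rhoT N t (cyl N n a) = K := by
    simpa [Measure.map_apply ((measurable_RN N).iterate n) MeasurableSet.univ]
      using congrArg (· univ) hK
  rw [hK, hmass]

end ConditionalMeasure

theorem stmt1_general {N : ℕ} (hN : 1 ≤ N) {t : ℝ} (ht : 1 - N < t) {n : ℕ} {a : ℕ → ℤ}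
    (ha : ∀ k < n, (N : ℤ) ≤ a k) {C : Set ℝ} (hC : MeasurableSet C) :
    rhoT N t ((RN N)^[n] ⁻¹' C ∩ cyl N n a)
      = rhoT N t (cyl N n a) * rhoT N (sRec N t a n) C := by
  have hiter : Measurable (RN N)^[n] := (measurable_RN N).iterate n
  rw [← Measure.restrict_apply (hiter hC), ← Measure.map_apply hiter hC,
    map_iterate_RN_restrict_cyl hN ht ha, Measure.smul_apply, smul_eq_mul]

theorem stmt1 (N : ℕ) (hN : 2 ≤ N) (t : ℝ) (ht : t ∈ Set.Icc (0 : ℝ) 1)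
    (n : ℕ) (hn : 1 ≤ n) (a : ℕ → ℤ) (ha : ∀ k < n, (N : ℤ) ≤ a k)
    (C : Set ℝ) (hC : MeasurableSet C) (hC1 : C ⊆ Set.Icc (0 : ℝ) 1) :
    (rhoT N t ((RN N)^[n] ⁻¹' C ∩ cyl N n a)).toReal
      = (rhoT N t (cyl N n a)).toReal * (rhoT N (sRec N t a n) C).toReal := by
  have hN' : (2 : ℝ) ≤ N := by exact_mod_cast hN
  rw [stmt1_general (by lia) (by linarith [ht.1]) ha hC, ENNReal.toReal_mul]
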